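/- LP-rounding gives a factor-5 guarantee for the general discrete guarding problem: let f : ℝ → ℝ be a terrain, G ⊆ ℝ a finite set of guards with nonnegative weights w : G → ℝ, and N ⊆ ℝ a finite set of points (possibly intersecting G). Suppose x : G → ℝ is nonnegative and for every p ∈ N, Σ_{g ∈ G, g sees p} x(g) ≥ 1. Then there exists A ⊆ G such that every p ∈ N is seen by some g ∈ A and Σ_{g ∈ A} w(g) ≤ 5·Σ_{g ∈ G} w(g)·x(g). -/

import Mathlib

/-!
Guards with `x g ≥ 1/5` are all taken, at a cost of at most five times their share of the LP value.
A point `p` seen by none of them receives its whole unit of coverage from the light guards, and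
the guard at `p` itself (if any) contributes less than `1/5`. So the light guards strictly
to the left of `p`, or those strictly to the right, contribute at least `2/5`. The left and right
problems are each solved at cost `5/2` times the LP value of the light guards, for a total of
factor `5`.

The one-sided problems lose no constant beyond this scaling because their covering LPs are
integral. The order claim for terrains (`Sees.order_claim`: for `a < b < c < d`, if `a` sees `c`
and `b` sees `d`, then `a` sees `d`) says that the one-sided visibility matrix, with rows and
columns suitably sorted, contains no submatrix `[1 1; 1 0]`. For such matrices `integral_cover`
proves integrality by induction on the points, with a local-ratio decomposition of the weights.
-/

open scoped Classical

/-- `a` sees `b` on the terrain `f`. -/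
def Sees (f : ℝ → ℝ) (a b : ℝ) : Prop :=
  ∀ t ∈ Set.Icc (0:ℝ) 1, f ((1 - t) * a + t * b) ≤ (1 - t) * f a + t * f b

lemma Sees.symm {f : ℝ → ℝ} {a b : ℝ} (h : Sees f a b) : Sees f b a := by
  intro t ht
  have := h (1 - t) ⟨by linarith [ht.2], by linarith [ht.1]⟩
  have e : (1 - (1 - t)) * a + (1 - t) * b = (1 - t) * b + t * a := by ring
  rw [e] at this
  linarith

/-- Visibility with the points of the segment parametrized by abscissa, denominators cleared. -/
lemma sees_iff_of_lt {f : ℝ → ℝ} {a b : ℝ} (hab : a < b) :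
    Sees f a b ↔ ∀ y, a ≤ y → y ≤ b → (b - a) * f y ≤ (b - y) * f a + (y - a) * f b := by
  have hpos : 0 < b - a := sub_pos.2 hab
  constructor
  · intro h y hay hyb
    have key := h ((y - a) / (b - a))
      ⟨div_nonneg (by linarith) hpos.le, (div_le_one hpos).2 (by linarith)⟩
    have e : (1 - (y - a) / (b - a)) * a + (y - a) / (b - a) * b = y := by
      field_simp
      ring
    rw [e] at key
    have := mul_le_mul_of_nonneg_left key hpos.le
    have e2 : (b - a) * ((1 - (y - a) / (b - a)) * f a + (y - a) / (b - a) * f b)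
        = (b - y) * f a + (y - a) * f b := by
      field_simp
      ring
    linarith
  · intro h t ht
    have key := h ((1 - t) * a + t * b) (by nlinarith [ht.1]) (by nlinarith [ht.2])
    refine le_of_mul_le_mul_left (key.trans_eq ?_) hpos
    ring

/-- The order claim for 1.5D terrains. -/
lemma Sees.order_claim {f : ℝ → ℝ} {a b c d : ℝ} (hab : a < b) (hbc : b < c) (hcd : c < d)
    (hac : Sees f a c) (hbd : Sees f b d) : Sees f a d := by
  rw [sees_iff_of_lt (by linarith)] at *
  -- `h y` is the (scaled) height of the terrain above the line through the points at `a` and `d`.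
  set h : ℝ → ℝ := fun y => (d - a) * f y - ((d - y) * f a + (y - a) * f d) with hh
  have hda : 0 < d - a := by linarith
  have h1 : ∀ y, a ≤ y → y ≤ c → (c - a) * h y ≤ (y - a) * h c := by
    intro y hy hy'
    have := mul_le_mul_of_nonneg_left (hac y hy hy') hda.le
    simp only [hh]
    linarith
  have h2 : ∀ y, b ≤ y → y ≤ d → (d - b) * h y ≤ (d - y) * h b := by
    intro y hy hy'
    have := mul_le_mul_of_nonneg_left (hbd y hy hy') hda.le
    simp only [hh]
    linarith
  have hb := h1 b hab.le hbc.le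
  have hc := h2 c hbc.le hcd.le
  have hc0 : h c ≤ 0 := by
    by_contra! hpos
    have hb' : 0 < h b := by
      by_contra! hneg
      nlinarith [mul_nonneg (sub_nonneg.2 hcd.le) (neg_nonneg.2 hneg),
        mul_pos (show 0 < d - b by linarith) hpos]
    nlinarith [mul_pos (sub_pos.2 hbc) hb', mul_pos (sub_pos.2 hbc) hpos,
      mul_pos (sub_pos.2 hab) hpos, mul_pos (sub_pos.2 hcd) hb']
  have hb0 : h b ≤ 0 := by
    by_contra! hpos
    nlinarith [mul_nonneg (sub_nonneg.2 hab.le) (neg_nonneg.2 hc0),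
      mul_pos (show 0 < c - a by linarith) hpos]
  intro y hy hy'
  suffices h y ≤ 0 by simp only [hh] at this; linarith
  rcases le_total y c with hyc | hyc
  · have := h1 y hy hyc
    by_contra! hpos
    nlinarith [mul_nonneg (sub_nonneg.2 hy) (neg_nonneg.2 hc0),
      mul_pos (show 0 < c - a by linarith) hpos]
  · have := h2 y (by linarith) hy'
    by_contra! hpos
    nlinarith [mul_nonneg (sub_nonneg.2 hy') (neg_nonneg.2 hb0),
      mul_pos (show 0 < d - b by linarith) hpos]

/-- Integrality of covering LPs in standard greedy form: `hΓ` forbids the submatrix `[1 1; 1 0]`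
when points are sorted by increasing `l` and guards by decreasing `k`. A point `p` with minimal
`l p` is treated by subtracting from the weights of its guards their minimum `δ`; by `hΓ`, a cover
of the other points needs only one of the guards of `p`, the one with least `k`, so
restoring the weights costs `δ` only once. -/
lemma integral_cover {α β : Type*} (M : α → β → Prop) (k : α → ℝ) (l : β → ℝ) (G : Finset α)
    (x : α → ℝ) (hx : ∀ g ∈ G, 0 ≤ x g)
    (hΓ : ∀ p p' g g', l p ≤ l p' → k g' ≤ k g → M g p → M g' p → M g p' → M g' p')
    (N : Finset β) :
    ∀ w : α → ℝ, (∀ g ∈ G, 0 ≤ w g) →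
      (∀ p ∈ N, 1 ≤ ∑ g ∈ G, if M g p then x g else 0) →
      ∃ A ⊆ G, (∀ p ∈ N, ∃ g ∈ A, M g p) ∧ ∑ g ∈ A, w g ≤ ∑ g ∈ G, w g * x g := by
  induction N using Finset.induction_on_min_value l with
  | empty =>
    intro w hw _
    exact ⟨∅, by simp, by simp, by
      simpa using Finset.sum_nonneg fun g hg => mul_nonneg (hw g hg) (hx g hg)⟩
  | insert p N hpN hmin ih =>
    intro w hw hcov
    have hp := hcov p (Finset.mem_insert_self _ _)
    have hS : (G.filter (M · p)).Nonempty := by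
      by_contra hne
      rw [Finset.not_nonempty_iff_eq_empty] at hne
      rw [← Finset.sum_filter, hne, Finset.sum_empty] at hp
      linarith
    obtain ⟨g₀, hg₀, hg₀min⟩ := Finset.exists_min_image _ w hS
    rw [Finset.mem_filter] at hg₀
    set r : α → ℝ := fun g => if M g p then w g - w g₀ else w g with hr
    have hr_nonneg : ∀ g ∈ G, 0 ≤ r g := by
      intro g hg
      by_cases hgp : M g p
      · simpa [hr, hgp] using hg₀min g (Finset.mem_filter.2 ⟨hg, hgp⟩)
      · simpa [hr, hgp] using hw g hg
    obtain ⟨A, hAG, hA, hAw⟩ := ih r hr_nonneg fun q hq => hcov q (Finset.mem_insert_of_mem hq)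
    have hsplit := Finset.sum_filter_add_sum_filter_not A (M · p) r
    -- The guards of `p` in `A` are replaced by a single one, without losing coverage of `N`.
    obtain ⟨g₁, hg₁G, hg₁p, hg₁w, hg₁cov⟩ : ∃ g₁ ∈ G, M g₁ p ∧
        r g₁ ≤ ∑ g ∈ A.filter (M · p), r g ∧
        ∀ q ∈ N, ∀ g ∈ A, M g p → M g q → M g₁ q := by
      rcases (A.filter (M · p)).eq_empty_or_nonempty with hT | hT
      · refine ⟨g₀, hg₀.1, hg₀.2, by simp [hT, hr, hg₀.2], fun q _ g hg hgp _ => ?_⟩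
        have : g ∈ A.filter (M · p) := Finset.mem_filter.2 ⟨hg, hgp⟩
        simp [hT] at this
      · obtain ⟨g₁, hg₁, hg₁min⟩ := Finset.exists_min_image _ k hT
        have hg₁' := Finset.mem_filter.1 hg₁
        refine ⟨g₁, hAG hg₁'.1, hg₁'.2, ?_, fun q hq g hg hgp hgq => ?_⟩
        · exact Finset.single_le_sum (f := r)
            (fun g hg => hr_nonneg g (hAG (Finset.mem_filter.1 hg).1)) hg₁
        · exact hΓ p q g g₁ (hmin q hq) (hg₁min g (Finset.mem_filter.2 ⟨hg, hgp⟩)) hgp hg₁'.2 hgq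
    refine ⟨insert g₁ (A.filter (¬ M · p)), ?_, ?_, ?_⟩
    · exact Finset.insert_subset hg₁G ((Finset.filter_subset _ _).trans hAG)
    · intro q hq
      rcases Finset.mem_insert.1 hq with rfl | hq
      · exact ⟨g₁, Finset.mem_insert_self _ _, hg₁p⟩
      · obtain ⟨g, hg, hgq⟩ := hA q hq
        by_cases hgp : M g p
        · exact ⟨g₁, Finset.mem_insert_self _ _, hg₁cov q hq g hg hgp hgq⟩
        · exact ⟨g, Finset.mem_insert_of_mem (Finset.mem_filter.2 ⟨hg, hgp⟩), hgq⟩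
    · rw [Finset.sum_insert (by simp [hg₁p])]
      have e1 : ∑ g ∈ A.filter (¬ M · p), w g = ∑ g ∈ A.filter (¬ M · p), r g :=
        Finset.sum_congr rfl fun g hg => by simp [hr, (Finset.mem_filter.1 hg).2]
      have e2 : r g₁ = w g₁ - w g₀ := by simp [hr, hg₁p]
      have e3 : ∑ g ∈ G, w g * x g
          = ∑ g ∈ G, r g * x g + w g₀ * ∑ g ∈ G, if M g p then x g else 0 := by
        rw [Finset.mul_sum, ← Finset.sum_add_distrib]
        refine Finset.sum_congr rfl fun g _ => ?_
        by_cases hgp : M g p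
        · simp only [hr, hgp, if_true]; ring
        · simp [hr, hgp]
      have e4 := mul_le_mul_of_nonneg_left hp (hw g₀ hg₀.1)
      linarith

/-- `integral_cover` applied to a solution covering every point `2/5` times, rescaled. -/
lemma integral_cover_scaled (M : ℝ → ℝ → Prop) (k : ℝ → ℝ) (G N : Finset ℝ)
    (w x : ℝ → ℝ) (hw : ∀ g ∈ G, 0 ≤ w g) (hx : ∀ g ∈ G, 0 ≤ x g)
    (hΓ : ∀ p p' g g', k p ≤ k p' → k g' ≤ k g → M g p → M g' p → M g p' → M g' p')
    (hcov : ∀ p ∈ N, 2 / 5 ≤ ∑ g ∈ G, if M g p then x g else 0) :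
    ∃ A ⊆ G, (∀ p ∈ N, ∃ g ∈ A, M g p) ∧
      ∑ g ∈ A, w g ≤ 5 / 2 * ∑ g ∈ G, w g * x g := by
  obtain ⟨A, hAG, hA, hAw⟩ := integral_cover M k k G (fun g => 5 / 2 * x g)
    (fun g hg => by have := hx g hg; positivity) hΓ N w hw (fun p hp => by
      have e : (∑ g ∈ G, if M g p then 5 / 2 * x g else 0)
          = 5 / 2 * ∑ g ∈ G, if M g p then x g else 0 := by
        rw [Finset.mul_sum]
        exact Finset.sum_congr rfl fun g _ => by split_ifs <;> simp
      have := hcov p hp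
      rw [e]
      linarith)
  refine ⟨A, hAG, hA, hAw.trans_eq ?_⟩
  rw [Finset.mul_sum]
  exact Finset.sum_congr rfl fun g _ => by ring

/-- LP-rounding gives a factor-5 guarantee for the general discrete guarding
problem (the point set may intersect the guard set). -/
theorem discrete_guarding_five_approx (f : ℝ → ℝ) (G N : Finset ℝ)
    (w x : ℝ → ℝ)
    (hw : ∀ g ∈ G, 0 ≤ w g) (hx : ∀ g ∈ G, 0 ≤ x g)
    (hcov : ∀ p ∈ N, 1 ≤ ∑ g ∈ G, if Sees f g p then x g else 0) :
    ∃ A ⊆ G, (∀ p ∈ N, ∃ g ∈ A, Sees f g p) ∧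
      ∑ g ∈ A, w g ≤ 5 * ∑ g ∈ G, w g * x g := by
  set H := G.filter (fun g => 1 / 5 ≤ x g) with hH
  set L := G.filter (fun g => ¬ 1 / 5 ≤ x g) with hL
  have hLG : L ⊆ G := Finset.filter_subset _ _
  set N₁ := N.filter (fun p => ¬ ∃ g ∈ H, Sees f g p) with hN₁
  have hwL : ∀ g ∈ L, 0 ≤ w g := fun g hg => hw g (hLG hg)
  have hxL : ∀ g ∈ L, 0 ≤ x g := fun g hg => hx g (hLG hg)
  obtain ⟨A₁, hA₁L, hA₁, hA₁w⟩ := integral_cover_scaled (fun g p => g < p ∧ Sees f g p) id L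
    (N₁.filter fun p => 2 / 5 ≤ ∑ g ∈ L, if g < p ∧ Sees f g p then x g else 0) w x hwL hxL
    (by
      rintro p p' g g' hp hg ⟨h1, h1'⟩ ⟨h2, h2'⟩ ⟨h3, h3'⟩
      rcases eq_or_lt_of_le (show p ≤ p' from hp) with rfl | hp
      · exact ⟨h2, h2'⟩
      rcases eq_or_lt_of_le (show g' ≤ g from hg) with rfl | hg
      · exact ⟨h3, h3'⟩
      exact ⟨hg.trans h3, Sees.order_claim hg h1 hp h2' h3'⟩)
    (fun p hp => by convert (Finset.mem_filter.1 hp).2)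
  obtain ⟨A₂, hA₂L, hA₂, hA₂w⟩ := integral_cover_scaled (fun g p => p < g ∧ Sees f g p)
    (fun y => -y) L
    (N₁.filter fun p => 2 / 5 ≤ ∑ g ∈ L, if p < g ∧ Sees f g p then x g else 0) w x hwL hxL
    (by
      rintro p p' g g' hp hg ⟨h1, h1'⟩ ⟨h2, h2'⟩ ⟨h3, h3'⟩
      rcases eq_or_lt_of_le (neg_le_neg_iff.1 hp) with rfl | hp
      · exact ⟨h2, h2'⟩
      rcases eq_or_lt_of_le (neg_le_neg_iff.1 hg) with rfl | hg
      · exact ⟨h3, h3'⟩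
      exact ⟨h3.trans hg, (Sees.order_claim hp h1 hg h3'.symm h2'.symm).symm⟩)
    (fun p hp => by convert (Finset.mem_filter.1 hp).2)
  refine ⟨H ∪ (A₁ ∪ A₂), ?_, ?_, ?_⟩
  · exact Finset.union_subset (Finset.filter_subset _ _)
      (Finset.union_subset (hA₁L.trans hLG) (hA₂L.trans hLG))
  · intro p hp
    by_cases hpH : ∃ g ∈ H, Sees f g p
    · obtain ⟨g, hg, hgp⟩ := hpH
      exact ⟨g, Finset.mem_union_left _ hg, hgp⟩
    have hpN₁ : p ∈ N₁ := Finset.mem_filter.2 ⟨hp, hpH⟩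
    have hLcov : 1 ≤ ∑ g ∈ L, if Sees f g p then x g else 0 := by
      have hs := Finset.sum_filter_add_sum_filter_not G (fun g => 1 / 5 ≤ x g)
        (fun g => if Sees f g p then x g else 0)
      have hz : ∑ g ∈ H, (if Sees f g p then x g else 0) = 0 :=
        Finset.sum_eq_zero fun g hg => if_neg fun h => hpH ⟨g, hg, h⟩
      have := hcov p hp
      rw [← hs] at this
      linarith
    have hthree : (∑ g ∈ L, if Sees f g p then x g else 0) ≤
        (∑ g ∈ L, if g < p ∧ Sees f g p then x g else 0) +
        (∑ g ∈ L, if p < g ∧ Sees f g p then x g else 0) +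
        ∑ g ∈ L, if g = p then x g else 0 := by
      rw [← Finset.sum_add_distrib, ← Finset.sum_add_distrib]
      refine Finset.sum_le_sum fun g hg => ?_
      have := hxL g hg
      rcases lt_trichotomy g p with h | h | h
      · simp [h, h.not_gt, h.ne]
      · subst h
        simp only [lt_irrefl, false_and, if_false, if_true]
        split_ifs <;> linarith
      · simp [h, h.not_gt, h.ne']
    have hself : (∑ g ∈ L, if g = p then x g else 0) ≤ 1 / 5 := by
      rw [Finset.sum_ite_eq']
      split_ifs with h
      · exact (not_le.1 (Finset.mem_filter.1 h).2).le
      · norm_num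
    by_cases hl : 2 / 5 ≤ ∑ g ∈ L, if g < p ∧ Sees f g p then x g else 0
    · obtain ⟨g, hg, hgp⟩ := hA₁ p (Finset.mem_filter.2 ⟨hpN₁, hl⟩)
      exact ⟨g, by simp [hg], hgp.2⟩
    · obtain ⟨g, hg, hgp⟩ := hA₂ p (Finset.mem_filter.2 ⟨hpN₁, by linarith⟩)
      exact ⟨g, by simp [hg], hgp.2⟩
  · have hsub : ∀ B C : Finset ℝ, B ⊆ G → C ⊆ G →
        ∑ g ∈ B ∪ C, w g ≤ ∑ g ∈ B, w g + ∑ g ∈ C, w g := by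
      intro B C hB hC
      rw [← Finset.sum_union_inter]
      have : 0 ≤ ∑ g ∈ B ∩ C, w g :=
        Finset.sum_nonneg fun g hg => hw g (hB (Finset.mem_inter.1 hg).1)
      linarith
    have u1 := hsub H (A₁ ∪ A₂) (Finset.filter_subset _ _)
      (Finset.union_subset (hA₁L.trans hLG) (hA₂L.trans hLG))
    have u2 := hsub A₁ A₂ (hA₁L.trans hLG) (hA₂L.trans hLG)
    have hHw : ∑ g ∈ H, w g ≤ 5 * ∑ g ∈ H, w g * x g := by
      rw [Finset.mul_sum]
      refine Finset.sum_le_sum fun g hg => ?_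
      obtain ⟨hgG, hgx⟩ := Finset.mem_filter.1 hg
      nlinarith [hw g hgG]
    have hs := Finset.sum_filter_add_sum_filter_not G (fun g => 1 / 5 ≤ x g)
      (fun g => w g * x g)
    rw [← hs]
    linarith
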